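/- Let a ≤ b be real numbers, let s > 0, let h̃: [a,b] → [0,1] be a unimodal function, and let Y be a real-valued random variable with P(Y ∈ [a, b−s]) = 1. Then |E[h̃(Y+s)] − E[h̃(Y)]| ≤ 2·Q(Y;s). -/

import Mathlib

open MeasureTheory ProbabilityTheory Filter Set
open scoped ENNReal

/-- The concentration (Lévy) function `Q(Y;λ) = sup_{x ∈ ℝ} P(x ≤ Y ≤ x + λ)`. -/
noncomputable def concQ {Ω : Type*} [MeasurableSpace Ω] (μ : Measure Ω)
    (Y : Ω → ℝ) (lam : ℝ) : ℝ :=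
  ⨆ x : ℝ, (μ {ω | x ≤ Y ω ∧ Y ω ≤ x + lam}).toReal
/-! The superlevel sets of a unimodal function are intervals. If `S` is an interval, `Y` and `Y + s`
can lie on different sides of `S` only by crossing one of its two endpoints, which confines `Y` to a
segment of length `s`: entering crosses the left endpoint and leaving the right one. The two
effects have opposite signs, so `|P(Y + s ∈ S) - P(Y ∈ S)| ≤ Q(Y; s)`. Integrating over the levels
of the function (layer cake) gives the bound even with the constant `1` in place of `2`. -/

section Quasiconcave

variable {𝕜 E β : Type*} [Semiring 𝕜] [PartialOrder 𝕜] [AddCommMonoid E]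

theorem quasiconcaveOn_of_monotoneOn_of_antitoneOn [LinearOrder E] [IsOrderedAddMonoid E]
    [Module 𝕜 E] [PosSMulMono 𝕜 E] [Preorder β] {I : Set E} (hI : I.OrdConnected) {f : E → β}
    {t : E} (hmono : MonotoneOn f (I ∩ Iic t)) (hanti : AntitoneOn f (I ∩ Ici t)) :
    QuasiconcaveOn 𝕜 I f := by
  refine fun r => OrdConnected.convex ⟨fun x ⟨hxI, hx⟩ y ⟨hyI, hy⟩ z hz => ?_⟩
  have hzI : z ∈ I := hI.out hxI hyI hz
  rcases le_total z t with hzt | htz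
  · exact ⟨hzI, hx.trans (hmono ⟨hxI, hz.1.trans hzt⟩ ⟨hzI, hzt⟩ hz.1)⟩
  · exact ⟨hzI, hy.trans (hanti ⟨hzI, htz⟩ ⟨hyI, htz.trans hz.2⟩ hz.2)⟩

open scoped Classical in
theorem quasiconcaveOn_univ_piecewise_const [SMul 𝕜 E] [LinearOrder β] {I : Set E} {f : E → β}
    (hf : QuasiconcaveOn 𝕜 I f) {c : β} (hc : ∀ x ∈ I, c ≤ f x) :
    QuasiconcaveOn 𝕜 univ (I.piecewise f fun _ => c) := by
  intro r
  rcases le_or_gt r c with hrc | hcr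
  · convert convex_univ using 1
    exact eq_univ_of_forall fun x =>
      ⟨mem_univ x, le_piecewise (fun y hy => hrc.trans (hc y hy)) (fun _ _ => hrc) x⟩
  · convert hf r using 1
    ext x
    by_cases hx : x ∈ I <;> simp [hx, hcr]

theorem measurable_of_quasiconcaveOn_univ [LinearOrder β] [TopologicalSpace β] [OrderTopology β]
    [SecondCountableTopology β] [MeasurableSpace β] [BorelSpace β] {g : ℝ → β}
    (hg : QuasiconcaveOn ℝ univ g) : Measurable g :=
  measurable_of_Ici fun r => by
    simpa only [mem_univ, true_and] using! (hg r).ordConnected.measurableSet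

end Quasiconcave

section Concentration

variable {Ω : Type*} [MeasurableSpace Ω] {μ : Measure Ω} {Y : Ω → ℝ} {s : ℝ}

theorem concQ_nonneg (μ : Measure Ω) (Y : Ω → ℝ) (s : ℝ) : 0 ≤ concQ μ Y s :=
  Real.iSup_nonneg fun _ => ENNReal.toReal_nonneg

variable [IsFiniteMeasure μ]

theorem measureReal_le_concQ (x : ℝ) : μ.real {ω | x ≤ Y ω ∧ Y ω ≤ x + s} ≤ concQ μ Y s :=
  le_ciSup (f := fun x : ℝ => (μ {ω | x ≤ Y ω ∧ Y ω ≤ x + s}).toReal)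
    ⟨μ.real univ, forall_mem_range.2 fun _ => measureReal_mono (subset_univ _)⟩ x

theorem measureReal_sub_le_concQ (x : ℝ) {A B : Set Ω}
    (hAB : ∀ ω ∈ A \ B, x ≤ Y ω ∧ Y ω ≤ x + s) : μ.real A - μ.real B ≤ concQ μ Y s :=
  calc μ.real A - μ.real B
      ≤ μ.real (A \ B) := le_measureReal_sdiff
    _ ≤ μ.real {ω | x ≤ Y ω ∧ Y ω ≤ x + s} := measureReal_mono hAB
    _ ≤ concQ μ Y s := measureReal_le_concQ x

theorem abs_measureReal_add_mem_sub_le_concQ (hs : 0 ≤ s) {S : Set ℝ} (hS : S.OrdConnected) :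
    |μ.real {ω | Y ω + s ∈ S} - μ.real {ω | Y ω ∈ S}| ≤ concQ μ Y s := by
  refine abs_sub_le_iff.2 ⟨measureReal_sub_le_concQ (sInf S - s) ?entering,
    measureReal_sub_le_concQ (sSup S - s) ?leaving⟩
  case entering =>
    rintro ω ⟨hmem : Y ω + s ∈ S, hnot : Y ω ∉ S⟩
    have hlower : Y ω ∈ lowerBounds S := fun z hz => by
      by_contra! hlt
      exact hnot (hS.out hz hmem ⟨hlt.le, by linarith⟩)
    have hle := csInf_le ⟨_, hlower⟩ hmem
    have hge := le_csInf ⟨_, hmem⟩ hlower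
    constructor <;> linarith
  case leaving =>
    rintro ω ⟨hmem : Y ω ∈ S, hnot : Y ω + s ∉ S⟩
    have hupper : Y ω + s ∈ upperBounds S := fun z hz => by
      by_contra! hlt
      exact hnot (hS.out hmem hz ⟨by linarith, hlt.le⟩)
    have hge := le_csSup ⟨_, hupper⟩ hmem
    have hle := csSup_le ⟨_, hmem⟩ hupper
    constructor <;> linarith

theorem integral_eq_add_intervalIntegral_measureReal_le {X : Ω → ℝ} (hX : AEMeasurable X μ)
    {c d : ℝ} (hcd : c ≤ d) (hXcd : ∀ᵐ ω ∂μ, X ω ∈ Icc c d) :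
    ∫ ω, X ω ∂μ = μ.real univ * c + ∫ u in c..d, μ.real {ω | u ≤ X ω} := by
  have hint : Integrable X μ := .of_mem_Icc c d hX hXcd
  have hlayer : ∫ ω, (X ω - c) ∂μ = ∫ u in Ioc 0 (d - c), μ.real {ω | u ≤ X ω - c} :=
    (hint.sub (integrable_const c)).integral_eq_integral_Ioc_meas_le
      (hXcd.mono fun ω hω => sub_nonneg.2 hω.1)
      (hXcd.mono fun ω hω => sub_le_sub_right hω.2 c)
  rw [integral_sub hint (integrable_const c), integral_const, smul_eq_mul,
    ← intervalIntegral.integral_of_le (sub_nonneg.2 hcd)] at hlayer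
  simp only [le_sub_iff_add_le] at hlayer
  rw [intervalIntegral.integral_comp_add_right (fun u => μ.real {ω | u ≤ X ω}), zero_add,
    sub_add_cancel] at hlayer
  linarith

theorem abs_integral_add_sub_le_concQ_of_quasiconcaveOn_univ (hs : 0 ≤ s)
    (hY : AEMeasurable Y μ) {g : ℝ → ℝ} (hg : QuasiconcaveOn ℝ univ g) {c d : ℝ}
    (hgcd : ∀ x, g x ∈ Icc c d) :
    |(∫ ω, g (Y ω + s) ∂μ) - ∫ ω, g (Y ω) ∂μ| ≤ (d - c) * concQ μ Y s := by
  have hcd : c ≤ d := (hgcd 0).1.trans (hgcd 0).2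
  have hlayer (X : Ω → ℝ) (hX : AEMeasurable X μ) :
      ∫ ω, g (X ω) ∂μ = μ.real univ * c + ∫ u in c..d, μ.real {ω | u ≤ g (X ω)} :=
    integral_eq_add_intervalIntegral_measureReal_le
      ((measurable_of_quasiconcaveOn_univ hg).comp_aemeasurable hX) hcd (.of_forall fun _ => hgcd _)
  have hint (X : Ω → ℝ) :
      IntervalIntegrable (fun u => μ.real {ω | u ≤ g (X ω)}) volume c d :=
    Antitone.intervalIntegrable fun _ _ huv => measureReal_mono fun _ => huv.trans
  have hlevel (u : ℝ) :
      |μ.real {ω | u ≤ g (Y ω + s)} - μ.real {ω | u ≤ g (Y ω)}| ≤ concQ μ Y s := by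
    simpa only [mem_univ, true_and] using!
      abs_measureReal_add_mem_sub_le_concQ (μ := μ) (Y := Y) hs (hg u).ordConnected
  calc |(∫ ω, g (Y ω + s) ∂μ) - ∫ ω, g (Y ω) ∂μ|
      = |∫ u in c..d, (μ.real {ω | u ≤ g (Y ω + s)} - μ.real {ω | u ≤ g (Y ω)})| := by
        rw [hlayer _ (hY.add_const s), hlayer _ hY, add_sub_add_left_eq_sub,
          ← intervalIntegral.integral_sub (hint _) (hint _)]
    _ ≤ concQ μ Y s * |d - c| := by
        rw [← Real.norm_eq_abs]
        exact intervalIntegral.norm_integral_le_of_norm_le_const fun u _ => hlevel u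
    _ = (d - c) * concQ μ Y s := by rw [abs_of_nonneg (sub_nonneg.2 hcd), mul_comm]

theorem stmt8_general (hs : 0 ≤ s) (hY : AEMeasurable Y μ) {I : Set ℝ} {h : ℝ → ℝ}
    (hquasi : QuasiconcaveOn ℝ I h) {c d : ℝ} (hrange : ∀ x ∈ I, h x ∈ Icc c d)
    (hYI : ∀ᵐ ω ∂μ, Y ω ∈ I ∧ Y ω + s ∈ I) :
    |(∫ ω, h (Y ω + s) ∂μ) - ∫ ω, h (Y ω) ∂μ| ≤ (d - c) * concQ μ Y s := by
  classical
  rcases I.eq_empty_or_nonempty with rfl | ⟨x, hx⟩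
  · obtain rfl : μ = 0 := by simpa using hYI
    simp [concQ]
  have hcd : c ≤ d := (hrange x hx).1.trans (hrange x hx).2
  have hshift : ∫ ω, h (Y ω + s) ∂μ = ∫ ω, I.piecewise h (fun _ => c) (Y ω + s) ∂μ :=
    integral_congr_ae (hYI.mono fun _ hω => (piecewise_eq_of_mem _ _ _ hω.2).symm)
  have hbase : ∫ ω, h (Y ω) ∂μ = ∫ ω, I.piecewise h (fun _ => c) (Y ω) ∂μ :=
    integral_congr_ae (hYI.mono fun _ hω => (piecewise_eq_of_mem _ _ _ hω.1).symm)
  rw [hshift, hbase]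
  refine abs_integral_add_sub_le_concQ_of_quasiconcaveOn_univ hs hY
    (quasiconcaveOn_univ_piecewise_const hquasi fun y hy => (hrange y hy).1) fun y => ?_
  by_cases hy : y ∈ I
  · simpa only [piecewise_eq_of_mem _ _ _ hy] using hrange y hy
  · simpa only [piecewise_eq_of_notMem _ _ _ hy] using left_mem_Icc.2 hcd

end Concentration

/-- For a unimodal function `h̃ : [a,b] → [0,1]`, `s > 0` and a
real random variable `Y` with `P(Y ∈ [a, b−s]) = 1`,
`|E[h̃(Y+s)] − E[h̃(Y)]| ≤ 2·Q(Y;s)`. -/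
theorem stmt8
    {Ω : Type*} [MeasurableSpace Ω] (μ : Measure Ω) [IsProbabilityMeasure μ]
    (a b : ℝ) (hab : a ≤ b) (s : ℝ) (hs : 0 < s)
    (h : ℝ → ℝ)
    (huni : ∃ t ∈ Set.Icc a b,
      MonotoneOn h (Set.Icc a t) ∧ AntitoneOn h (Set.Icc t b))
    (hrange : ∀ x ∈ Set.Icc a b, h x ∈ Set.Icc (0 : ℝ) 1)
    (Y : Ω → ℝ) (hY : Measurable Y)
    (hYsupp : ∀ᵐ ω ∂μ, Y ω ∈ Set.Icc a (b - s)) :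
    |(∫ ω, h (Y ω + s) ∂μ) - ∫ ω, h (Y ω) ∂μ| ≤ 2 * concQ μ Y s := by
  obtain ⟨t, -, hmono, hanti⟩ := huni
  have hquasi : QuasiconcaveOn ℝ (Icc a b) h := quasiconcaveOn_of_monotoneOn_of_antitoneOn
    ordConnected_Icc (hmono.mono fun x hx => ⟨hx.1.1, hx.2⟩) (hanti.mono fun x hx => ⟨hx.2, hx.1.2⟩)
  have hYI : ∀ᵐ ω ∂μ, Y ω ∈ Icc a b ∧ Y ω + s ∈ Icc a b := hYsupp.mono fun ω ⟨hle, hge⟩ =>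
    ⟨⟨hle, by linarith⟩, by linarith, by linarith⟩
  have hle := stmt8_general hs.le hY.aemeasurable hquasi hrange hYI
  linarith [concQ_nonneg μ Y s]
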